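/- Let Y be a pure simplicial complex, Y₀ ⊆ V(Y), and let ≺ be a total order on V(Y) inducing a star decomposition of (sd Y, Y₀) in vertices. Assume st(Y₀, sd Y) has trivial reduced homology. Then for every y ∈ Y₀ other than the ≺-largest element of V(Y), the complex st(V(lk({y},Y))_{≻y}, sd lk({y},Y)) also has trivial reduced homology. -/

import Mathlib

/-! Common definitions: finite abstract simplicial complexes, links, stars,
barycentric subdivision, joins, collapsibility, shellability, vertex
decomposability, star decomposability (also "in vertices"), and simplicial
homology (reduced, over ℤ and ℤ₂). -/

namespace Paper

open Finset

variable {V : Type*} [DecidableEq V]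

/-- `K` is a (finite, abstract) simplicial complex: downward closed family of finsets. -/
def IsCplx (K : Finset (Finset V)) : Prop :=
  ∀ σ ∈ K, ∀ τ ⊆ σ, τ ∈ K

/-- Vertex set of a complex. -/
def verts (K : Finset (Finset V)) : Finset V := K.sup id

/-- Dimension of a complex (as an integer; `-1` for `∅` and `{∅}`). -/
def dim (K : Finset (Finset V)) : ℤ := ((K.sup Finset.card : ℕ) : ℤ) - 1

/-- The facets (inclusion-maximal faces) of `K`. -/
def facets (K : Finset (Finset V)) : Finset (Finset V) :=
  K.filter fun σ => ∀ τ ∈ K, σ ⊆ τ → σ = τ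

/-- `K` is pure `d`-dimensional: it is nonempty, every face has dimension at most `d`
and every face is contained in a face of dimension exactly `d`. -/
def PureDim (K : Finset (Finset V)) (d : ℤ) : Prop :=
  K.Nonempty ∧ (∀ σ ∈ K, (σ.card : ℤ) ≤ d + 1) ∧
    ∀ σ ∈ K, ∃ τ ∈ K, σ ⊆ τ ∧ (τ.card : ℤ) = d + 1

/-- Link of a face. -/
def lk (σ : Finset V) (K : Finset (Finset V)) : Finset (Finset V) :=
  (K.filter fun τ => σ ⊆ τ).image fun τ => τ \ σ

/-- Closed star of a face. -/
def star (σ : Finset V) (K : Finset (Finset V)) : Finset (Finset V) :=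
  K.filter fun τ => τ ∪ σ ∈ K

/-- Union of the closed stars of a set of vertices. -/
def starSet (S : Finset V) (K : Finset (Finset V)) : Finset (Finset V) :=
  K.filter fun τ => ∃ v ∈ S, τ ∪ {v} ∈ K

/-- Subcomplex induced on a vertex set `S`. -/
def induced (S : Finset V) (K : Finset (Finset V)) : Finset (Finset V) :=
  K.filter fun σ => σ ⊆ S

/-- Deletion of a vertex:  `K - v`. -/
def deleteV (v : V) (K : Finset (Finset V)) : Finset (Finset V) :=
  K.filter fun σ => v ∉ σ

/-- The full simplex on vertex set `σ`. -/
def simplexCplx (σ : Finset V) : Finset (Finset V) := σ.powerset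

/-- The boundary `∂σ` of the simplex on `σ`: all proper subsets of `σ`. -/
def bdSimplex (σ : Finset V) : Finset (Finset V) := σ.powerset.erase σ

/-- Barycentric subdivision: vertices are the nonempty faces of `K`, faces are
chains of nonempty faces of `K`. -/
def sd (K : Finset (Finset V)) : Finset (Finset (Finset V)) :=
  if K = ∅ then ∅ else
    K.powerset.filter fun c => (∅ ∉ c) ∧ ∀ σ ∈ c, ∀ τ ∈ c, σ ⊆ τ ∨ τ ⊆ σ

/-- Join of two simplicial complexes (on the disjoint union of vertex types). -/
def join {α β : Type*} [DecidableEq α] [DecidableEq β]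
    (X : Finset (Finset α)) (Y : Finset (Finset β)) : Finset (Finset (α ⊕ β)) :=
  (X ×ˢ Y).image fun p => p.1.image Sum.inl ∪ p.2.image Sum.inr

/-- `K'` arises from `K` by an elementary collapse: remove a free face `σ`
together with the unique face `τ` properly containing it. -/
def ElemCollapse (K K' : Finset (Finset V)) : Prop :=
  ∃ σ ∈ K, ∃ τ ∈ K, σ ⊂ τ ∧ (∀ ρ ∈ K, σ ⊂ ρ → ρ = τ) ∧ K' = (K.erase σ).erase τ

/-- `K` collapses to `K'`. -/
def CollapsesTo (K K' : Finset (Finset V)) : Prop :=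
  Relation.ReflTransGen ElemCollapse K K'

/-- `K` is collapsible: it collapses to a single vertex. -/
def Collapsible (K : Finset (Finset V)) : Prop :=
  ∃ w : V, CollapsesTo K ({∅, {w}} : Finset (Finset V))

/-- The removal-collapsibility condition: `K` is empty, or becomes collapsible
after removal of a set of facets. -/
def RC (K : Finset (Finset V)) : Prop :=
  K = ∅ ∨ ∃ F ⊆ facets K, Collapsible (K \ F)

/-- The hereditary removal-collapsibility condition: the link of every face
(including the empty face, whose link is `K` itself) satisfies (RC). -/
def HRC (K : Finset (Finset V)) : Prop :=
  ∀ σ ∈ K, RC (lk σ K)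

/-- `K` is shellable: there is a total order of its facets such that each facet
meets the union of the previous ones in a pure complex of codimension one. -/
def Shellable (K : Finset (Finset V)) : Prop :=
  ∃ L : List (Finset V), L.Nodup ∧ L.toFinset = facets K ∧
    ∀ i : ℕ, (hi : i < L.length) → 1 ≤ i →
      PureDim ((L.get ⟨i, hi⟩).powerset ∩ ((L.take i).map Finset.powerset).foldr (· ∪ ·) ∅)
        (((L.get ⟨i, hi⟩).card : ℤ) - 2)

/-- Vertex decomposability (Provan–Billera) of a pure complex. -/
inductive VD : Finset (Finset V) → Prop
  | simplex (σ : Finset V) : VD σ.powerset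
  | shed (K : Finset (Finset V)) (v : V) (hv : {v} ∈ K)
      (hdel : PureDim (deleteV v K) (dim K)) (hVDdel : VD (deleteV v K))
      (hlk : PureDim (lk {v} K) (dim K - 1)) (hVDlk : VD (lk {v} K)) : VD K

/-- `L` is a shedding order of `K` (a total order on `V(K)`, given as a
duplicate-free list, witnessing vertex decomposability; once a simplex is
reached, an arbitrary order of its vertices qualifies). -/
inductive SheddingOrder : List V → Finset (Finset V) → Prop
  | simplex (σ : Finset V) (L : List V) (hnd : L.Nodup) (hfin : L.toFinset = σ) :
      SheddingOrder L σ.powerset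
  | cons (v : V) (L : List V) (K : Finset (Finset V)) (hv : {v} ∈ K) (hvL : v ∉ L)
      (hcov : insert v L.toFinset = verts K)
      (hdel : PureDim (deleteV v K) (dim K))
      (hrest : SheddingOrder L (deleteV v K))
      (hlk : PureDim (lk {v} K) (dim K - 1)) (hVDlk : VD (lk {v} K)) :
      SheddingOrder (v :: L) K

/-- `W` induces a star partition of `X`: the stars of the vertices of `W`
cover `X` and no two distinct vertices of `W` lie in a common face. -/
def StarPartition (W : Finset V) (X : Finset (Finset V)) : Prop :=
  (∀ σ ∈ X, ∃ w ∈ W, σ ∪ {w} ∈ X) ∧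
    ∀ w₁ ∈ W, ∀ w₂ ∈ W, w₁ ≠ w₂ → ¬∃ σ ∈ X, w₁ ∈ σ ∧ w₂ ∈ σ

/-- The overlap `O_X(x, W') = lk(x,X) ∩ st(W',X)`. -/
def overlap (X : Finset (Finset V)) (x : V) (W' : Finset V) : Finset (Finset V) :=
  lk {x} X ∩ starSet W' X

/-- Star decomposability of the pair `(X, X₀)`.  The total order on the set `W`
inducing the star partition is encoded as a duplicate-free list `L` (earlier in
the list = smaller in the order). -/
inductive StarDec : Finset (Finset V) → Finset V → Prop
  | base : StarDec ({∅} : Finset (Finset V)) (∅ : Finset V)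
  | step (X : Finset (Finset V)) (X₀ : Finset V) (k : ℤ) (hk : 0 ≤ k) (hpure : PureDim X k)
      (L : List V) (hne : L ≠ []) (hnd : L.Nodup) (hsub : L.toFinset ⊆ verts X)
      (hsp : StarPartition L.toFinset X)
      (horder : ∃ i < L.length, X₀ = (L.drop i).toFinset)
      (U : ℕ → Finset V)
      (hUne : ∀ i, i + 1 < L.length → (U i).Nonempty)
      (hUsub : ∀ i, (hi : i + 1 < L.length) →
        U i ⊆ verts (lk {L.get ⟨i, Nat.lt_of_succ_lt hi⟩} X))
      (hUst : ∀ i, (hi : i + 1 < L.length) →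
        starSet (U i) (lk {L.get ⟨i, Nat.lt_of_succ_lt hi⟩} X) =
          overlap X (L.get ⟨i, Nat.lt_of_succ_lt hi⟩) ((L.drop (i + 1)).toFinset))
      (hlink : ∀ i, (hi : i + 1 < L.length) →
        StarDec (lk {L.get ⟨i, Nat.lt_of_succ_lt hi⟩} X) (U i))
      (Ulast : Finset V)
      (hlast : StarDec (lk {L.getLast hne} X) Ulast) :
      StarDec X X₀

/-- The order encoded by the list `L` induces a star decomposition of `(X, X₀)`. -/
def InducesStarDecomp (L : List V) (X : Finset (Finset V)) (X₀ : Finset V) : Prop :=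
  (L = [] ∧ X = ({∅} : Finset (Finset V)) ∧ X₀ = ∅) ∨
  ∃ hne : L ≠ [], L.Nodup ∧ StarPartition L.toFinset X ∧
    (∃ i < L.length, X₀ = (L.drop i).toFinset) ∧
    (∀ i, (hi : i + 1 < L.length) →
      ∃ U : Finset V, U.Nonempty ∧ U ⊆ verts (lk {L.get ⟨i, Nat.lt_of_succ_lt hi⟩} X) ∧
        starSet U (lk {L.get ⟨i, Nat.lt_of_succ_lt hi⟩} X) =
          overlap X (L.get ⟨i, Nat.lt_of_succ_lt hi⟩) ((L.drop (i + 1)).toFinset) ∧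
        StarDec (lk {L.get ⟨i, Nat.lt_of_succ_lt hi⟩} X) U) ∧
    (∃ U : Finset V, StarDec (lk {L.getLast hne} X) U)

/-- Star decomposability *in vertices* of the pair `(sd Y, Y₀)`; the data is the
underlying complex `Y` together with `Y₀ ⊆ V(Y)`.  The total order on `V(Y)` is
encoded as a duplicate-free list `L`. -/
inductive StarDecV : Finset (Finset V) → Finset V → Prop
  | base : StarDecV ({∅} : Finset (Finset V)) (∅ : Finset V)
  | step (Y : Finset (Finset V)) (Y₀ : Finset V) (k : ℤ) (hk : 0 ≤ k) (hpure : PureDim Y k)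
      (L : List V) (hne : L ≠ []) (hnd : L.Nodup) (hV : L.toFinset = verts Y)
      (horder : ∃ i < L.length, Y₀ = (L.drop i).toFinset)
      (hlink : ∀ i, (hi : i + 1 < L.length) →
        StarDecV (lk {L.get ⟨i, Nat.lt_of_succ_lt hi⟩} Y)
          (verts (lk {L.get ⟨i, Nat.lt_of_succ_lt hi⟩} Y) ∩ (L.drop (i + 1)).toFinset))
      (hlast : StarDecV (lk {L.getLast hne} Y) (verts (lk {L.getLast hne} Y))) :
      StarDecV Y Y₀

/-- The order encoded by the list `L` induces a star decomposition of
`(sd Y, Y₀)` in vertices. -/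
def InducesStarDecompV (L : List V) (Y : Finset (Finset V)) (Y₀ : Finset V) : Prop :=
  (L = [] ∧ Y = ({∅} : Finset (Finset V)) ∧ Y₀ = ∅) ∨
  ∃ hne : L ≠ [], L.Nodup ∧ L.toFinset = verts Y ∧
    (∃ i < L.length, Y₀ = (L.drop i).toFinset) ∧
    (∀ i, (hi : i + 1 < L.length) →
      StarDecV (lk {L.get ⟨i, Nat.lt_of_succ_lt hi⟩} Y)
        (verts (lk {L.get ⟨i, Nat.lt_of_succ_lt hi⟩} Y) ∩ (L.drop (i + 1)).toFinset)) ∧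
    StarDecV (lk {L.getLast hne} Y) (verts (lk {L.getLast hne} Y))

/-- Simplicial isomorphism between two complexes. -/
def SimpIso {α β : Type*} [DecidableEq α] [DecidableEq β]
    (K : Finset (Finset α)) (L : Finset (Finset β)) : Prop :=
  ∃ f : α → β, Set.InjOn f ↑(verts K) ∧ K.image (fun σ => σ.image f) = L

/-- Simplicial isomorphism of pairs (complex, subcomplex). -/
def SimpIsoPair {α β : Type*} [DecidableEq α] [DecidableEq β]
    (K K₁ : Finset (Finset α)) (L L₁ : Finset (Finset β)) : Prop :=
  ∃ f : α → β, Set.InjOn f ↑(verts K) ∧ K.image (fun σ => σ.image f) = L ∧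
    K₁.image (fun σ => σ.image f) = L₁

/-! Reduced simplicial homology (the empty face is included, so the chain
complex below, graded by cardinality of faces, computes *reduced* homology). -/

/-- Faces of `K` of cardinality `n`. -/
def kfaces (K : Finset (Finset V)) (n : ℕ) : Finset (Finset V) :=
  K.filter fun σ => σ.card = n

/-- The mod 2 boundary operator, from chains on faces of cardinality `n+1`
to chains on faces of cardinality `n`. -/
noncomputable def bdry2 (K : Finset (Finset V)) (n : ℕ) :
    (↥(kfaces K (n + 1)) → ZMod 2) →ₗ[ZMod 2] (↥(kfaces K n) → ZMod 2) :=
  Matrix.mulVecLin (Matrix.of fun (τ : ↥(kfaces K n)) (σ : ↥(kfaces K (n + 1))) =>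
    if (τ : Finset V) ⊆ (σ : Finset V) then (1 : ZMod 2) else 0)

/-- The reduced Betti number `β̃ᵢ(K; ℤ₂)`. -/
noncomputable def betti2 (K : Finset (Finset V)) (i : ℕ) : ℕ :=
  Module.finrank (ZMod 2) (LinearMap.ker (bdry2 K i)) -
    Module.finrank (ZMod 2) (LinearMap.range (bdry2 K (i + 1)))

/-- Signed incidence coefficient (with respect to an arbitrary, but fixed,
linear order on the vertices; reduced homology does not depend on the choice). -/
noncomputable def coeffInt (σ τ : Finset V) : ℤ :=
  letI : LinearOrder V := IsWellOrder.linearOrder WellOrderingRel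
  (σ \ τ).sum fun v => (-1 : ℤ) ^ ((σ.filter fun u => u < v).card)

/-- The integral boundary operator, from chains on faces of cardinality `n+1`
to chains on faces of cardinality `n`. -/
noncomputable def bdryZ (K : Finset (Finset V)) (n : ℕ) :
    (↥(kfaces K (n + 1)) → ℤ) →ₗ[ℤ] (↥(kfaces K n) → ℤ) :=
  Matrix.mulVecLin (Matrix.of fun (τ : ↥(kfaces K n)) (σ : ↥(kfaces K (n + 1))) =>
    if (τ : Finset V) ⊆ (σ : Finset V) then coeffInt (σ : Finset V) (τ : Finset V) else 0)

/-- `K` has trivial reduced (integral) homology: `H̃ₙ(K; ℤ) = 0` for all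
`n ≥ -1`. -/
def TrivialRedHomology (K : Finset (Finset V)) : Prop :=
  K.Nonempty ∧ LinearMap.range (bdryZ K 0) = ⊤ ∧
    ∀ n : ℕ, LinearMap.ker (bdryZ K n) = LinearMap.range (bdryZ K (n + 1))

/-- Reduced Euler characteristic. -/
def redEuler (K : Finset (Finset V)) : ℤ :=
  (∑ σ ∈ K.filter fun σ => σ ≠ ∅, (-1 : ℤ) ^ (σ.card - 1)) - 1

/-!
Write `X_M` for the star of a final segment `M` of `Y₀` in `sd Y`. Adjoining the vertex `y` that
precedes `M` glues the cone `st(y, sd Y)` to `X_M` along their overlap, and adding and removing `y`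
identifies this overlap with the star of `M` in `sd lk({y}, Y)`. By induction on the degree,
Mayer–Vietoris then shows that `X_M` has no reduced homology below the dimension of `Y`. The overlap
has smaller dimension than `Y`, so in all other degrees the homology of `X_M` injects into that of
`X_{y ∪ M}`. Hence acyclicity descends from `X_{Y₀}` to all `X_M`, and Mayer–Vietoris passes it on
to the overlaps.
-/

/-! ### Oriented simplicial chains -/

section Chains

variable {α : Type*}

open Classical in
/-- The sign of the ordered pair `(u, v)` with respect to the well-order of the vertices that
orients simplices in `coeffInt`: it is `-1` exactly when `u` precedes `v`. -/
noncomputable def orderSign (u v : α) : ℤˣ := if WellOrderingRel u v then -1 else 1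

lemma orderSign_self (v : α) : orderSign v v = 1 :=
  if_neg (irrefl v)

lemma orderSign_swap {u v : α} (h : u ≠ v) : orderSign u v = -orderSign v u := by
  unfold orderSign
  rcases trichotomous_of WellOrderingRel u v with huv | rfl | hvu
  · rw [if_pos huv, if_neg (asymm huv)]
  · exact absurd rfl h
  · rw [if_neg (asymm hvu), if_pos hvu, neg_neg]

/-- The sign with which the facet `σ \ {v}` of the simplex `σ` enters its boundary. It does not
depend on whether `v` belongs to `σ`. -/
noncomputable def incidenceSign (σ : Finset α) (v : α) : ℤˣ := ∏ u ∈ σ, orderSign u v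

lemma mem_kfaces {K : Finset (Finset α)} {n : ℕ} {σ : Finset α} :
    σ ∈ kfaces K n ↔ σ ∈ K ∧ σ.card = n :=
  mem_filter

/-- The chains of `K` supported on faces with exactly `n` vertices. -/
noncomputable def chains (K : Finset (Finset α)) (n : ℕ) : Submodule ℤ (Finset α →₀ ℤ) :=
  Finsupp.supported ℤ ℤ (kfaces K n : Set (Finset α))

lemma chains_eq_span (K : Finset (Finset α)) (n : ℕ) :
    chains K n = Submodule.span ℤ ((Finsupp.single · 1) '' (kfaces K n : Set (Finset α))) :=
  Finsupp.supported_eq_span_single ℤ _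

lemma chains_le_iff {K : Finset (Finset α)} {n : ℕ} {P : Submodule ℤ (Finset α →₀ ℤ)} :
    chains K n ≤ P ↔ ∀ σ ∈ K, σ.card = n → Finsupp.single σ 1 ∈ P := by
  simp only [chains_eq_span, Submodule.span_le, Set.subset_def, Set.forall_mem_image,
    SetLike.mem_coe, mem_kfaces, and_imp]

lemma single_mem_chains {K : Finset (Finset α)} {n : ℕ} {σ : Finset α} (hσ : σ ∈ K)
    (hn : σ.card = n) : Finsupp.single σ (1 : ℤ) ∈ chains K n :=
  chains_le_iff.mp le_rfl σ hσ hn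

lemma chains_eq_bot {K : Finset (Finset α)} {n : ℕ} (h : ∀ σ ∈ K, σ.card ≠ n) :
    chains K n = ⊥ := by
  rw [chains, kfaces, filter_false_of_mem h, coe_empty, Finsupp.supported_empty]

end Chains

lemma coeffInt_erase {σ : Finset V} {v : V} (hv : v ∈ σ) :
    coeffInt σ (σ.erase v) = incidenceSign σ v := by
  simp only [coeffInt, sdiff_erase_self hv, sum_singleton, incidenceSign, orderSign, prod_ite,
    prod_const, one_pow, mul_one, Units.val_pow_eq_pow_val, Units.val_neg, Units.val_one]
  congr!

lemma incidenceSign_erase {σ : Finset V} {u : V} (hu : u ∈ σ) (v : V) :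
    incidenceSign σ v = orderSign u v * incidenceSign (σ.erase u) v :=
  (mul_prod_erase σ (orderSign · v) hu).symm

lemma incidenceSign_insert {σ : Finset V} {u : V} (hu : u ∉ σ) (v : V) :
    incidenceSign (insert u σ) v = orderSign u v * incidenceSign σ v :=
  prod_insert hu

lemma incidenceSign_mul_incidenceSign_erase {σ : Finset V} {u v : V} (hu : u ∈ σ) (hv : v ∈ σ)
    (huv : u ≠ v) :
    incidenceSign σ u * incidenceSign (σ.erase u) v =
      -(incidenceSign σ v * incidenceSign (σ.erase v) u) := by
  rw [incidenceSign_erase hu v, incidenceSign_erase hv u, orderSign_swap huv, neg_mul, neg_mul,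
    neg_neg, mul_right_comm]

/-- The simplicial boundary on the free abelian group generated by all finite sets of vertices;
the empty set is a simplex, so this is the augmented boundary. -/
noncomputable def boundary : (Finset V →₀ ℤ) →ₗ[ℤ] (Finset V →₀ ℤ) :=
  Finsupp.linearCombination ℤ fun σ =>
    ∑ v ∈ σ, incidenceSign σ v • Finsupp.single (σ.erase v) 1

lemma boundary_single (σ : Finset V) :
    boundary (Finsupp.single σ 1) =
      ∑ v ∈ σ, incidenceSign σ v • Finsupp.single (σ.erase v) (1 : ℤ) := by
  rw [boundary, Finsupp.linearCombination_single, one_smul]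

lemma boundary_boundary (z : Finset V →₀ ℤ) : boundary (boundary z) = 0 := by
  suffices boundary ∘ₗ boundary = (0 : (Finset V →₀ ℤ) →ₗ[ℤ] (Finset V →₀ ℤ)) from
    LinearMap.congr_fun this z
  ext1 σ
  ext1
  simp only [LinearMap.comp_apply, Finsupp.lsingle_apply, boundary_single, map_sum,
    map_zsmul_unit, smul_sum, smul_smul, LinearMap.zero_apply]
  rw [sum_sigma']
  refine sum_involution (fun p _ => ⟨p.2, p.1⟩) ?_ ?_ ?_ fun _ _ => rfl <;>
    rintro ⟨u, v⟩ h <;> simp only [mem_sigma, mem_erase] at h ⊢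
  · rw [incidenceSign_mul_incidenceSign_erase h.1 h.2.2 h.2.1.symm, erase_right_comm,
      Units.neg_smul, neg_add_cancel]
  · exact fun _ heq => h.2.1 (congrArg Sigma.fst heq)
  · exact ⟨h.2.2, h.2.1.symm, h.1⟩

lemma boundary_mem_chains {K : Finset (Finset V)} (hK : IsCplx K) {n : ℕ} {z : Finset V →₀ ℤ}
    (hz : z ∈ chains K (n + 1)) : boundary z ∈ chains K n := by
  suffices chains K (n + 1) ≤ (chains K n).comap boundary from this hz
  refine chains_le_iff.mpr fun σ hσ hn => ?_
  rw [Submodule.mem_comap, boundary_single]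
  refine sum_mem fun v hv => zsmul_mem (single_mem_chains (hK σ hσ _ (erase_subset v σ)) ?_) _
  rw [card_erase_of_mem hv, hn, Nat.add_sub_cancel]

lemma boundary_eq_zero_of_mem_chains_zero {K : Finset (Finset V)} {z : Finset V →₀ ℤ}
    (hz : z ∈ chains K 0) : boundary z = 0 := by
  suffices chains K 0 ≤ LinearMap.ker boundary from this hz
  refine chains_le_iff.mpr fun σ _ hσ => ?_
  rw [LinearMap.mem_ker, card_eq_zero.mp hσ, boundary_single, sum_empty]

/-- Every cycle of `K` on faces with `n` vertices is a boundary in `K`, i.e. the reduced homology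
of `K` vanishes in degree `n - 1`. -/
def ExactAt (K : Finset (Finset V)) (n : ℕ) : Prop :=
  ∀ z ∈ chains K n, boundary z = 0 → ∃ w ∈ chains K (n + 1), boundary w = z

lemma ExactAt.exists_singleton_mem {K : Finset (Finset V)} (h : ExactAt K 0) (hK : ∅ ∈ K) :
    ∃ v, {v} ∈ K := by
  by_contra! hv
  have hempty : Finsupp.single ∅ 1 ∈ chains K 0 := single_mem_chains hK card_empty
  obtain ⟨w, hw, hwz⟩ := h _ hempty (boundary_eq_zero_of_mem_chains_zero hempty)
  have : chains K (0 + 1) = ⊥ := chains_eq_bot fun σ hσ hcard => by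
    obtain ⟨v, rfl⟩ := card_eq_one.mp hcard
    exact hv v hσ
  rw [this, Submodule.mem_bot] at hw
  rw [hw, map_zero, eq_comm, Finsupp.single_eq_zero] at hwz
  exact one_ne_zero hwz

/-! ### Mayer–Vietoris -/

lemma chains_union (A B : Finset (Finset V)) (n : ℕ) :
    chains (A ∪ B) n = chains A n ⊔ chains B n := by
  rw [chains, chains, chains, ← Finsupp.supported_union, kfaces, filter_union, coe_union]; rfl

lemma chains_inter (A B : Finset (Finset V)) (n : ℕ) :
    chains (A ∩ B) n = chains A n ⊓ chains B n := by
  rw [chains, chains, chains, ← Finsupp.supported_inter, kfaces, filter_inter_distrib, coe_inter]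
  rfl

lemma chains_le_union_left (A B : Finset (Finset V)) (n : ℕ) : chains A n ≤ chains (A ∪ B) n :=
  chains_union A B n ▸ le_sup_left

lemma chains_le_union_right (A B : Finset (Finset V)) (n : ℕ) : chains B n ≤ chains (A ∪ B) n :=
  chains_union A B n ▸ le_sup_right

section MayerVietoris

variable {A B : Finset (Finset V)} {n : ℕ}

lemma exists_add_of_mem_chains_union {z : Finset V →₀ ℤ} (hz : z ∈ chains (A ∪ B) n) :
    ∃ a ∈ chains A n, ∃ b ∈ chains B n, a + b = z :=
  Submodule.mem_sup.mp (chains_union A B n ▸ hz)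

lemma ExactAt.union (hA : IsCplx A) (hB : IsCplx B) (hAn : ExactAt A n) (hBn : ExactAt B n)
    (hAB : ∀ m, m + 1 = n → ExactAt (A ∩ B) m) : ExactAt (A ∪ B) n := by
  intro z hz hz0
  obtain ⟨a, ha, b, hb, rfl⟩ := exists_add_of_mem_chains_union hz
  rw [map_add] at hz0
  obtain ⟨c, hcA, hcB, hc⟩ :
      ∃ c, c ∈ chains A n ∧ c ∈ chains B n ∧ boundary c = boundary a := by
    cases n with
    | zero =>
      exact ⟨0, zero_mem _, zero_mem _,
        by rw [map_zero, boundary_eq_zero_of_mem_chains_zero ha]⟩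
    | succ m =>
      have hmem : boundary a ∈ chains (A ∩ B) m := by
        rw [chains_inter]
        refine ⟨boundary_mem_chains hA ha, ?_⟩
        rw [eq_neg_of_add_eq_zero_left hz0]
        exact neg_mem (boundary_mem_chains hB hb)
      obtain ⟨c, hc, hca⟩ := hAB m rfl _ hmem (boundary_boundary a)
      rw [chains_inter] at hc
      exact ⟨c, hc.1, hc.2, hca⟩
  obtain ⟨a', ha', haa'⟩ := hAn (a - c) (sub_mem ha hcA) (by rw [map_sub, hc, sub_self])
  obtain ⟨b', hb', hbb'⟩ := hBn (b + c) (add_mem hb hcB) (by rw [map_add, hc, add_comm, hz0])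
  refine ⟨a' + b', add_mem (chains_le_union_left A B _ ha') (chains_le_union_right A B _ hb'), ?_⟩
  rw [map_add, haa', hbb']
  abel

lemma ExactAt.inter (hA : IsCplx A) (hB : IsCplx B) (hAn : ExactAt A n) (hBn : ExactAt B n)
    (hAB : ExactAt (A ∪ B) (n + 1)) : ExactAt (A ∩ B) n := by
  intro z hz hz0
  rw [chains_inter] at hz
  obtain ⟨a, ha, haz⟩ := hAn z hz.1 hz0
  obtain ⟨b, hb, hbz⟩ := hBn z hz.2 hz0
  obtain ⟨c, hc, hcab⟩ := hAB (a - b)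
    (sub_mem (chains_le_union_left A B _ ha) (chains_le_union_right A B _ hb))
    (by rw [map_sub, haz, hbz, sub_self])
  obtain ⟨a', ha', b', hb', rfl⟩ := exists_add_of_mem_chains_union hc
  rw [map_add] at hcab
  have heq : a - boundary a' = b + boundary b' := by
    rw [sub_eq_iff_eq_add, add_assoc, add_comm (boundary b'), hcab, add_sub_cancel]
  refine ⟨a - boundary a', ?_, by rw [map_sub, haz, boundary_boundary, sub_zero]⟩
  rw [chains_inter]
  exact ⟨sub_mem ha (boundary_mem_chains hA ha'),
    heq ▸ add_mem hb (boundary_mem_chains hB hb')⟩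

lemma ExactAt.of_union_left (hA : IsCplx A) (hB : IsCplx B) (hAB : ∀ σ ∈ A ∩ B, σ.card ≠ n)
    (h : ExactAt (A ∪ B) n) : ExactAt A n := by
  intro z hz hz0
  obtain ⟨w, hw, rfl⟩ := h z (chains_le_union_left A B n hz) hz0
  obtain ⟨a, ha, b, hb, rfl⟩ := exists_add_of_mem_chains_union hw
  rw [map_add] at hz ⊢
  have hb0 : boundary b ∈ chains (A ∩ B) n := by
    rw [chains_inter]
    refine ⟨?_, boundary_mem_chains hB hb⟩
    rw [← add_sub_cancel_left (boundary a) (boundary b)]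
    exact sub_mem hz (boundary_mem_chains hA ha)
  rw [chains_eq_bot hAB, Submodule.mem_bot] at hb0
  exact ⟨a, ha, by rw [hb0, add_zero]⟩

end MayerVietoris

/-! ### Cones -/

/-- The chain homotopy `σ ↦ v * σ` given by coning off with apex `v`. -/
noncomputable def coneHomotopy (v : V) : (Finset V →₀ ℤ) →ₗ[ℤ] (Finset V →₀ ℤ) :=
  Finsupp.linearCombination ℤ fun σ =>
    if v ∈ σ then 0 else incidenceSign σ v • Finsupp.single (insert v σ) 1

lemma coneHomotopy_single_of_mem {v : V} {σ : Finset V} (hv : v ∈ σ) :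
    coneHomotopy v (Finsupp.single σ 1) = 0 := by
  rw [coneHomotopy, Finsupp.linearCombination_single, if_pos hv, smul_zero]

lemma coneHomotopy_single_of_notMem {v : V} {σ : Finset V} (hv : v ∉ σ) :
    coneHomotopy v (Finsupp.single σ 1) =
      incidenceSign σ v • Finsupp.single (insert v σ) (1 : ℤ) := by
  rw [coneHomotopy, Finsupp.linearCombination_single, if_neg hv, one_smul]

lemma coneHomotopy_boundary_single_of_mem {v : V} {σ : Finset V} (hv : v ∈ σ) :
    coneHomotopy v (boundary (Finsupp.single σ 1)) = Finsupp.single σ 1 := by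
  rw [boundary_single, map_sum, sum_eq_single_of_mem v hv, map_zsmul_unit,
    coneHomotopy_single_of_notMem (notMem_erase v σ), smul_smul, incidenceSign_erase hv,
    orderSign_self, one_mul, Int.units_mul_self, one_smul, insert_erase hv]
  intro w _ hwv
  rw [map_zsmul_unit, coneHomotopy_single_of_mem (mem_erase.mpr ⟨hwv.symm, hv⟩), smul_zero]

lemma boundary_coneHomotopy_single_of_notMem {v : V} {σ : Finset V} (hv : v ∉ σ) :
    boundary (coneHomotopy v (Finsupp.single σ 1)) =
      Finsupp.single σ 1 - coneHomotopy v (boundary (Finsupp.single σ 1)) := by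
  rw [coneHomotopy_single_of_notMem hv, map_zsmul_unit, boundary_single, sum_insert hv,
    erase_insert hv, incidenceSign_insert hv, orderSign_self, one_mul, smul_add, smul_smul,
    Int.units_mul_self, one_smul, boundary_single, map_sum, smul_sum, sub_eq_add_neg,
    ← sum_neg_distrib]
  congr 1
  refine sum_congr rfl fun w hw => ?_
  have hwv : w ≠ v := ne_of_mem_of_not_mem hw hv
  rw [map_zsmul_unit, coneHomotopy_single_of_notMem fun h => hv (mem_of_mem_erase h), smul_smul,
    smul_smul, erase_insert_of_ne hwv.symm, ← Units.neg_smul, incidenceSign_insert hv,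
    incidenceSign_erase hw v, orderSign_swap hwv]
  congr 1
  rw [neg_mul, neg_mul, mul_mul_mul_comm, Int.units_mul_self, one_mul, mul_comm]

lemma boundary_coneHomotopy_add_coneHomotopy_boundary (v : V) (z : Finset V →₀ ℤ) :
    boundary (coneHomotopy v z) + coneHomotopy v (boundary z) = z := by
  suffices boundary ∘ₗ coneHomotopy v + coneHomotopy v ∘ₗ boundary = LinearMap.id from
    LinearMap.congr_fun this z
  ext1 σ
  ext1
  simp only [LinearMap.comp_apply, LinearMap.add_apply, Finsupp.lsingle_apply, LinearMap.id_apply]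
  by_cases hv : v ∈ σ
  · rw [coneHomotopy_single_of_mem hv, map_zero, zero_add, coneHomotopy_boundary_single_of_mem hv]
  · rw [boundary_coneHomotopy_single_of_notMem hv, sub_add_cancel]

lemma exactAt_of_cone {K : Finset (Finset V)} {v : V} (hK : ∀ σ ∈ K, insert v σ ∈ K) (n : ℕ) :
    ExactAt K n := by
  intro z hz hz0
  refine ⟨coneHomotopy v z, ?_, ?_⟩
  · suffices chains K n ≤ (chains K (n + 1)).comap (coneHomotopy v) from this hz
    refine chains_le_iff.mpr fun σ hσ hn => ?_
    rw [Submodule.mem_comap]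
    by_cases hv : v ∈ σ
    · rw [coneHomotopy_single_of_mem hv]
      exact zero_mem _
    · rw [coneHomotopy_single_of_notMem hv]
      exact zsmul_mem (single_mem_chains (hK σ hσ) (hn ▸ card_insert_of_notMem hv)) _
  · simpa only [hz0, map_zero, add_zero] using boundary_coneHomotopy_add_coneHomotopy_boundary v z

/-! ### Relabelling vertices -/

section Relabelling

variable {α β : Type*} (e : α ↪ β)

lemma orderSign_mul_orderSign_comm (u v : α) :
    orderSign u v * orderSign (e u) (e v) = orderSign v u * orderSign (e v) (e u) := by
  obtain rfl | h := eq_or_ne u v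
  · rfl
  · rw [orderSign_swap h, orderSign_swap (e.injective.ne h), neg_mul_neg]

/-- The sign relating the orientation of `σ` to that of its image under the relabelling `e`: the
parity of the number of pairs of vertices of `σ` whose order is reversed by `e`. -/
noncomputable def relabelSign (σ : Finset α) : ℤˣ :=
  ∏ p ∈ σ.sym2, Sym2.lift ⟨fun u v => orderSign u v * orderSign (e u) (e v),
    orderSign_mul_orderSign_comm e⟩ p

/-- The isomorphism of chain complexes onto its image induced by relabelling the vertices along
`e`. -/
noncomputable def chainMap : (Finset α →₀ ℤ) →ₗ[ℤ] (Finset β →₀ ℤ) :=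
  Finsupp.linearCombination ℤ fun σ => relabelSign e σ • Finsupp.single (σ.map e) 1

lemma chainMap_single (σ : Finset α) :
    chainMap e (Finsupp.single σ 1) = relabelSign e σ • Finsupp.single (σ.map e) (1 : ℤ) := by
  rw [chainMap, Finsupp.linearCombination_single, one_smul]

lemma chainMap_injective : Function.Injective (chainMap e) :=
  ((Finsupp.linearIndependent_single_one ℤ (Finset β)).comp _ (map_injective e)).units_smul
    fun σ => relabelSign e σ

lemma relabelSign_eq [DecidableEq α] {σ : Finset α} {v : α} (hv : v ∈ σ) :
    relabelSign e σ =
      incidenceSign σ v * incidenceSign (σ.map e) (e v) * relabelSign e (σ.erase v) := by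
  have hcons : relabelSign e (cons v (σ.erase v) (notMem_erase v σ)) =
      (∏ u ∈ cons v (σ.erase v) (notMem_erase v σ), orderSign v u * orderSign (e v) (e u)) *
        relabelSign e (σ.erase v) := by
    rw [relabelSign, sym2_cons, prod_disjUnion, prod_map]
    rfl
  simp only [cons_eq_insert, insert_erase hv] at hcons
  rw [hcons, incidenceSign, incidenceSign, prod_map, ← prod_mul_distrib]
  simp only [orderSign_mul_orderSign_comm e v]

lemma map_chainMap_chains [DecidableEq β] (K : Finset (Finset α)) (n : ℕ) :
    (chains K n).map (chainMap e) = chains (K.image (Finset.map e)) n := by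
  apply le_antisymm
  · rw [Submodule.map_le_iff_le_comap, chains_le_iff]
    intro σ hσ hn
    rw [Submodule.mem_comap, chainMap_single]
    exact zsmul_mem (single_mem_chains (mem_image_of_mem _ hσ) (by rw [card_map, hn])) _
  · rw [chains_le_iff, forall_mem_image]
    intro σ hσ hn
    refine ⟨relabelSign e σ • Finsupp.single σ 1,
      zsmul_mem (single_mem_chains hσ (by rwa [card_map] at hn)) _, ?_⟩
    rw [map_zsmul_unit, chainMap_single, smul_smul, Int.units_mul_self, one_smul]

variable [DecidableEq α] [DecidableEq β]

lemma boundary_chainMap (z : Finset α →₀ ℤ) :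
    boundary (chainMap e z) = chainMap e (boundary z) := by
  suffices boundary ∘ₗ chainMap e = chainMap e ∘ₗ boundary from LinearMap.congr_fun this z
  ext1 σ
  ext1
  simp only [LinearMap.comp_apply, Finsupp.lsingle_apply, chainMap_single, map_zsmul_unit,
    boundary_single, sum_map, map_sum, smul_sum]
  refine sum_congr rfl fun v hv => ?_
  rw [smul_smul, smul_smul, relabelSign_eq e hv, map_erase, mul_right_comm,
    mul_assoc, mul_assoc, ← mul_assoc (incidenceSign (σ.map e) _), Int.units_mul_self, one_mul]

lemma exactAt_image_map_iff {K : Finset (Finset α)} {n : ℕ} :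
    ExactAt (K.image (Finset.map e)) n ↔ ExactAt K n := by
  simp only [ExactAt, ← map_chainMap_chains, Submodule.mem_map, forall_exists_index, and_imp,
    forall_apply_eq_imp_iff₂, exists_exists_and_eq_and, boundary_chainMap,
    (chainMap_injective e).eq_iff, map_eq_zero_iff _ (chainMap_injective e)]

end Relabelling

/-! ### Comparison with `TrivialRedHomology` -/

section Coordinates

variable {α : Type*} (K : Finset (Finset α)) (n : ℕ)

/-- The chain of `K` with prescribed coefficients on the faces with `n` vertices; it identifies
the coordinate space on which `bdryZ` acts with `chains K n`. -/
noncomputable def chainOfCoeff : (kfaces K n → ℤ) →ₗ[ℤ] (Finset α →₀ ℤ) :=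
  Fintype.linearCombination ℤ fun σ => Finsupp.single (σ : Finset α) 1

lemma chainOfCoeff_injective : Function.Injective (chainOfCoeff K n) :=
  (Finsupp.linearIndependent_single_one ℤ (Finset α)).comp _ Subtype.val_injective
    |>.fintypeLinearCombination_injective

lemma range_chainOfCoeff : LinearMap.range (chainOfCoeff K n) = chains K n := by
  rw [chainOfCoeff, Fintype.range_linearCombination, chains_eq_span, Set.image_eq_range]
  rfl

end Coordinates

section Comparison

variable {K : Finset (Finset V)} (hK : IsCplx K)
include hK

lemma filter_subset_kfaces {n : ℕ} {σ : Finset V} (hσ : σ ∈ kfaces K (n + 1)) :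
    (kfaces K n).filter (· ⊆ σ) = σ.image σ.erase := by
  rw [mem_kfaces] at hσ
  ext τ
  simp only [mem_filter, mem_kfaces, mem_image]
  constructor
  · rintro ⟨⟨-, hτ⟩, hsub⟩
    obtain ⟨v, hv, rfl⟩ := exists_eq_insert_iff.mpr ⟨hsub, by rw [hτ, hσ.2]⟩
    exact ⟨v, mem_insert_self v τ, erase_insert hv⟩
  · rintro ⟨v, hv, rfl⟩
    exact ⟨⟨hK σ hσ.1 _ (erase_subset v σ), by rw [card_erase_of_mem hv, hσ.2]; rfl⟩,
      erase_subset v σ⟩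

lemma chainOfCoeff_bdryZ {n : ℕ} (f : kfaces K (n + 1) → ℤ) :
    chainOfCoeff K n (bdryZ K n f) = boundary (chainOfCoeff K (n + 1) f) := by
  suffices chainOfCoeff K n ∘ₗ bdryZ K n = boundary ∘ₗ chainOfCoeff K (n + 1) from
    LinearMap.congr_fun this f
  refine LinearMap.pi_ext' fun ⟨σ, hσ⟩ => LinearMap.ext_ring ?_
  simp only [LinearMap.comp_apply, LinearMap.single_apply, chainOfCoeff, bdryZ,
    Matrix.mulVecLin_apply, Matrix.mulVec_single_one, Fintype.linearCombination_apply_single,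
    one_smul, boundary_single]
  simp only [Fintype.linearCombination_apply, Matrix.col_apply, Matrix.of_apply, ite_smul,
    zero_smul]
  rw [sum_coe_sort (kfaces K n) fun τ =>
      if τ ⊆ σ then coeffInt σ τ • Finsupp.single τ (1 : ℤ) else 0, ← sum_filter,
    filter_subset_kfaces hK hσ, sum_image (erase_injOn σ)]
  exact sum_congr rfl fun v hv => by rw [coeffInt_erase hv, Units.smul_def]

lemma mem_ker_bdryZ_iff {n : ℕ} {f : kfaces K (n + 1) → ℤ} :
    f ∈ LinearMap.ker (bdryZ K n) ↔ boundary (chainOfCoeff K (n + 1) f) = 0 := by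
  rw [LinearMap.mem_ker, ← chainOfCoeff_bdryZ hK, map_eq_zero_iff _ (chainOfCoeff_injective K n)]

lemma mem_range_bdryZ_iff {n : ℕ} {f : kfaces K n → ℤ} :
    f ∈ LinearMap.range (bdryZ K n) ↔
      ∃ w ∈ chains K (n + 1), boundary w = chainOfCoeff K n f := by
  simp only [← range_chainOfCoeff, LinearMap.mem_range, exists_exists_eq_and,
    ← chainOfCoeff_bdryZ hK, (chainOfCoeff_injective K n).eq_iff]

lemma exactAt_iff_forall_mem_range {n : ℕ} :
    ExactAt K n ↔
      ∀ f, boundary (chainOfCoeff K n f) = 0 → f ∈ LinearMap.range (bdryZ K n) := by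
  simp only [mem_range_bdryZ_iff hK, ExactAt, ← range_chainOfCoeff K n, LinearMap.mem_range,
    forall_exists_index, forall_apply_eq_imp_iff]

lemma exactAt_zero_iff : ExactAt K 0 ↔ LinearMap.range (bdryZ K 0) = ⊤ := by
  rw [exactAt_iff_forall_mem_range hK, LinearMap.range_eq_top]
  refine forall_congr' fun f => imp_iff_right ?_
  exact boundary_eq_zero_of_mem_chains_zero (range_chainOfCoeff K 0 ▸ LinearMap.mem_range_self _ f)

lemma exactAt_succ_iff {n : ℕ} :
    ExactAt K (n + 1) ↔ LinearMap.ker (bdryZ K n) = LinearMap.range (bdryZ K (n + 1)) := by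
  have hle : LinearMap.range (bdryZ K (n + 1)) ≤ LinearMap.ker (bdryZ K n) := fun f hf => by
    obtain ⟨w, -, hw⟩ := (mem_range_bdryZ_iff hK).mp hf
    rw [mem_ker_bdryZ_iff hK, ← hw, boundary_boundary]
  simp only [exactAt_iff_forall_mem_range hK, ← mem_ker_bdryZ_iff hK, ← SetLike.le_def]
  exact ⟨fun h => h.antisymm hle, fun h => h.le⟩

lemma trivialRedHomology_iff :
    TrivialRedHomology K ↔ K.Nonempty ∧ ∀ n, ExactAt K n := by
  simp only [TrivialRedHomology, ← exactAt_zero_iff hK, ← exactAt_succ_iff hK,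
    Nat.and_forall_add_one]

end Comparison

/-! ### Links and stars in the barycentric subdivision -/

lemma mem_verts_iff {Y : Finset (Finset V)} (hY : IsCplx Y) {v : V} :
    v ∈ verts Y ↔ {v} ∈ Y := by
  simp only [verts, mem_sup, id]
  exact ⟨fun ⟨σ, hσ, hv⟩ => hY σ hσ _ (singleton_subset_iff.mpr hv),
    fun h => ⟨{v}, h, mem_singleton_self v⟩⟩

lemma mem_lk_singleton {Y : Finset (Finset V)} {y : V} {ρ : Finset V} :
    ρ ∈ lk {y} Y ↔ y ∉ ρ ∧ insert y ρ ∈ Y := by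
  simp only [lk, mem_image, mem_filter, singleton_subset_iff, sdiff_singleton_eq_erase]
  constructor
  · rintro ⟨τ, ⟨hτ, hy⟩, rfl⟩
    exact ⟨notMem_erase y τ, by rwa [insert_erase hy]⟩
  · rintro ⟨hy, hρ⟩
    exact ⟨insert y ρ, ⟨hρ, mem_insert_self y ρ⟩, erase_insert hy⟩

lemma IsCplx.lk_singleton {Y : Finset (Finset V)} (hY : IsCplx Y) (y : V) :
    IsCplx (lk {y} Y) := by
  intro σ hσ τ hτ
  rw [mem_lk_singleton] at hσ ⊢
  exact ⟨fun hy => hσ.1 (hτ hy), hY _ hσ.2 _ (insert_subset_insert y hτ)⟩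

lemma singleton_mem_lk_singleton {Y : Finset (Finset V)} (hY : IsCplx Y) {σ : Finset V}
    (hσ : σ ∈ Y) {y v : V} (hyσ : y ∈ σ) (hvσ : v ∈ σ) (hvy : v ≠ y) : {v} ∈ lk {y} Y := by
  rw [mem_lk_singleton, notMem_singleton]
  exact ⟨hvy.symm, hY σ hσ _ (insert_subset hyσ (singleton_subset_iff.mpr hvσ))⟩

lemma PureDim.lk_singleton {Y : Finset (Finset V)} {k : ℤ} (hp : PureDim Y k) {y : V}
    (hy : {y} ∈ Y) : PureDim (lk {y} Y) (k - 1) := by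
  have hcard {ρ : Finset V} (hρ : y ∉ ρ) : ((insert y ρ).card : ℤ) = ρ.card + 1 := by
    rw [card_insert_of_notMem hρ, Nat.cast_succ]
  refine ⟨⟨∅, mem_lk_singleton.mpr ⟨notMem_empty y, hy⟩⟩, fun ρ hρ => ?_, fun ρ hρ => ?_⟩ <;>
    rw [mem_lk_singleton] at hρ
  · have := hp.2.1 _ hρ.2
    rw [hcard hρ.1] at this
    lia
  · obtain ⟨τ, hτ, hsub, hτk⟩ := hp.2.2 _ hρ.2
    have hyτ : y ∈ τ := hsub (mem_insert_self y ρ)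
    refine ⟨τ.erase y, mem_lk_singleton.mpr ⟨notMem_erase y τ, by rwa [insert_erase hyτ]⟩,
      subset_erase.mpr ⟨(subset_insert y ρ).trans hsub, hρ.1⟩, ?_⟩
    rw [← insert_erase hyτ, hcard (notMem_erase y τ)] at hτk
    lia

/-- The star `st(S, sd Y)` of a set `S` of vertices of `Y` in the barycentric subdivision. -/
def vertexStar (Y : Finset (Finset V)) (S : Finset V) : Finset (Finset (Finset V)) :=
  starSet (S.image fun v => {v}) (sd Y)

lemma mem_sd {Y c : Finset (Finset V)} :
    c ∈ sd Y ↔ Y.Nonempty ∧ c ⊆ Y ∧ ∅ ∉ c ∧ IsChain (· ⊆ ·) (c : Set (Finset V)) := by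
  have hchain : (∀ σ ∈ c, ∀ τ ∈ c, σ ⊆ τ ∨ τ ⊆ σ) ↔ IsChain (· ⊆ ·) (c : Set (Finset V)) :=
    ⟨fun h σ hσ τ hτ _ => h σ hσ τ hτ, fun h σ hσ τ hτ => h.total hσ hτ⟩
  unfold sd
  split_ifs with hY
  · simp only [hY, notMem_empty, Finset.not_nonempty_empty, false_and]
  · simp only [mem_filter, mem_powerset, hchain, nonempty_iff_ne_empty, ne_eq, hY,
      not_false_eq_true, true_and]

lemma mem_vertexStar {Y : Finset (Finset V)} {S : Finset V} {c : Finset (Finset V)} :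
    c ∈ vertexStar Y S ↔ c ⊆ Y ∧ IsChain (· ⊆ ·) (c : Set (Finset V)) ∧
      ∃ v ∈ S, {v} ∈ Y ∧ ∀ σ ∈ c, v ∈ σ := by
  simp only [vertexStar, starSet, mem_filter, exists_mem_image, union_comm c, singleton_union,
    mem_sd, mem_insert, insert_subset_iff, coe_insert]
  constructor
  · rintro ⟨-, v, hv, -, ⟨hvY, hcY⟩, hempty, hchain⟩
    refine ⟨hcY, hchain.mono (Set.subset_insert _ _), v, hv, hvY, fun σ hσ => ?_⟩
    rcases hchain.total (Set.mem_insert _ _) (Set.mem_insert_of_mem _ hσ) with hvσ | hσv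
    · exact singleton_subset_iff.mp hvσ
    · obtain rfl | rfl := subset_singleton_iff.mp hσv
      · exact absurd (Or.inr hσ) hempty
      · exact mem_singleton_self v
  · rintro ⟨hcY, hchain, v, hv, hvY, hvc⟩
    have hempty : ∅ ∉ c := fun h => notMem_empty v (hvc ∅ h)
    exact ⟨⟨⟨_, hvY⟩, hcY, hempty, hchain⟩, v, hv, ⟨_, hvY⟩, ⟨hvY, hcY⟩,
      not_or.mpr ⟨(singleton_ne_empty v).symm, hempty⟩,
      hchain.insert fun σ hσ _ => Or.inl (singleton_subset_iff.mpr (hvc σ hσ))⟩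

section VertexStar

variable {Y : Finset (Finset V)} {S : Finset V}

lemma isCplx_vertexStar : IsCplx (vertexStar Y S) := by
  intro c hc d hd
  rw [mem_vertexStar] at hc ⊢
  obtain ⟨hcY, hchain, v, hv, hvY, hvc⟩ := hc
  exact ⟨hd.trans hcY, hchain.mono (coe_subset.mpr hd), v, hv, hvY, fun σ hσ => hvc σ (hd hσ)⟩

lemma vertexStar_nonempty_iff : (vertexStar Y S).Nonempty ↔ ∃ v ∈ S, {v} ∈ Y := by
  constructor
  · rintro ⟨c, hc⟩
    obtain ⟨-, -, v, hv, hvY, -⟩ := mem_vertexStar.mp hc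
    exact ⟨v, hv, hvY⟩
  · rintro ⟨v, hv, hvY⟩
    exact ⟨∅, mem_vertexStar.mpr ⟨empty_subset Y, by simp, v, hv, hvY, by simp⟩⟩

lemma empty_mem_vertexStar (h : (vertexStar Y S).Nonempty) : ∅ ∈ vertexStar Y S :=
  isCplx_vertexStar _ h.choose_spec _ (empty_subset _)

lemma vertexStar_insert (y : V) :
    vertexStar Y (insert y S) = vertexStar Y S ∪ vertexStar Y {y} := by
  ext c
  simp only [mem_vertexStar, mem_union, mem_insert, mem_singleton, or_and_right, exists_or,
    exists_eq_left, and_or_left, or_comm]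

lemma vertexStar_verts_inter (hY : IsCplx Y) : vertexStar Y (verts Y ∩ S) = vertexStar Y S := by
  ext c
  simp only [mem_vertexStar, mem_inter, mem_verts_iff hY]
  refine and_congr_right' (and_congr_right' (exists_congr fun v => ?_))
  tauto

lemma exactAt_vertexStar_singleton (y : V) (n : ℕ) : ExactAt (vertexStar Y {y}) n := by
  refine exactAt_of_cone (v := {y}) (fun c hc => ?_) n
  simp only [mem_vertexStar, mem_singleton, exists_eq_left] at hc ⊢
  refine ⟨insert_subset hc.2.2.1 hc.1, ?_, hc.2.2.1, ?_⟩
  · rw [coe_insert]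
    exact hc.2.1.insert fun σ hσ _ => Or.inl (singleton_subset_iff.mpr (hc.2.2.2 σ hσ))
  · exact forall_mem_insert _ _ _ |>.mpr ⟨mem_singleton_self y, hc.2.2.2⟩

end VertexStar

lemma card_le_of_isChain {α : Type*} {c : Finset (Finset α)}
    (hc : IsChain (· ⊆ ·) (c : Set (Finset α))) {a b : ℕ}
    (hab : ∀ σ ∈ c, σ.card ∈ Icc a b) : c.card ≤ b + 1 - a := by
  rw [← Nat.card_Icc]
  refine card_le_card_of_injOn card hab fun σ hσ τ hτ h => ?_
  rcases hc.total hσ hτ with hsub | hsub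
  · exact eq_of_subset_of_card_le hsub h.ge
  · exact (eq_of_subset_of_card_le hsub h.le).symm

section Overlap

variable {Y : Finset (Finset V)} {S : Finset V} {y : V}

/-- Adding `y` to a set not containing it and removing it from a set containing it. -/
def toggle (y : V) : Finset V ↪ Finset V := ⟨fun σ => symmDiff σ {y}, symmDiff_left_injective {y}⟩

lemma toggle_of_mem {σ : Finset V} (hy : y ∈ σ) : toggle y σ = σ.erase y :=
  (symmDiff_of_ge (singleton_subset_iff.mpr hy)).trans (sdiff_singleton_eq_erase y σ)

lemma toggle_of_notMem {σ : Finset V} (hy : y ∉ σ) : toggle y σ = insert y σ :=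
  (disjoint_singleton_right.mpr hy).symmDiff_eq_sup.trans (union_comm σ {y})

lemma card_le_of_mem_overlap (hyS : y ∉ S) {k : ℕ} (hk : ∀ σ ∈ Y, σ.card ≤ k + 1)
    {c : Finset (Finset V)} (hc : c ∈ vertexStar Y S ∩ vertexStar Y {y}) : c.card ≤ k := by
  simp only [mem_inter, mem_vertexStar, mem_singleton, exists_eq_left] at hc
  obtain ⟨⟨hcY, hchain, v, hv, -, hvc⟩, -, -, -, hyc⟩ := hc
  have hvy : v ≠ y := ne_of_mem_of_not_mem hv hyS
  refine card_le_of_isChain (a := 2) hchain fun σ hσ => mem_Icc.mpr ⟨?_, hk σ (hcY hσ)⟩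
  exact one_lt_card.mpr ⟨v, hvc σ hσ, y, hyc σ hσ, hvy⟩

lemma vertexStar_lk_nonempty_of_singleton_mem_overlap (hY : IsCplx Y) (hyS : y ∉ S) {σ : Finset V}
    (hσ : {σ} ∈ vertexStar Y S ∩ vertexStar Y {y}) : (vertexStar (lk {y} Y) S).Nonempty := by
  simp only [mem_inter, mem_vertexStar, mem_singleton, exists_eq_left, singleton_subset_iff,
    forall_eq] at hσ
  obtain ⟨⟨hσY, -, v, hv, -, hvσ⟩, -, -, -, hyσ⟩ := hσ
  exact vertexStar_nonempty_iff.mpr ⟨v, hv,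
    singleton_mem_lk_singleton hY hσY hyσ hvσ (ne_of_mem_of_not_mem hv hyS)⟩

lemma map_toggle_map_toggle (c : Finset (Finset V)) :
    (c.map (toggle y)).map (toggle y) = c := by
  rw [map_map]
  convert map_refl
  ext1 σ
  exact symmDiff_symmDiff_cancel_right {y} σ

lemma map_toggle_mem_vertexStar_lk (hY : IsCplx Y) (hyS : y ∉ S)
    (hne : (vertexStar (lk {y} Y) S).Nonempty) {c : Finset (Finset V)}
    (hc : c ∈ vertexStar Y S ∩ vertexStar Y {y}) : c.map (toggle y) ∈ vertexStar (lk {y} Y) S := by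
  simp only [mem_inter, mem_vertexStar, mem_singleton, exists_eq_left] at hc
  obtain ⟨⟨hcY, hchain, v, hv, -, hvc⟩, -, -, -, hyc⟩ := hc
  have hmap : c.map (toggle y) = c.image (Finset.erase · y) := by
    rw [map_eq_image]
    exact image_congr fun σ hσ => toggle_of_mem (hyc σ hσ)
  obtain ⟨u, hu, hulk, huc⟩ : ∃ u ∈ S, {u} ∈ lk {y} Y ∧ ∀ σ ∈ c, u ∈ σ := by
    obtain rfl | ⟨σ, hσ⟩ := c.eq_empty_or_nonempty
    · obtain ⟨u, hu, hulk⟩ := vertexStar_nonempty_iff.mp hne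
      exact ⟨u, hu, hulk, fun σ hσ => absurd hσ (notMem_empty σ)⟩
    · exact ⟨v, hv, singleton_mem_lk_singleton hY (hcY hσ) (hyc σ hσ) (hvc σ hσ)
        (ne_of_mem_of_not_mem hv hyS), hvc⟩
  rw [hmap, mem_vertexStar, coe_image]
  refine ⟨image_subset_iff.mpr fun σ hσ => ?_, ?_, u, hu, hulk, forall_mem_image.mpr fun σ hσ => ?_⟩
  · rw [mem_lk_singleton, insert_erase (hyc σ hσ)]
    exact ⟨notMem_erase y σ, hcY hσ⟩
  · exact hchain.image_of_map_rel _ _ _ fun σ τ h => erase_subset_erase y h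
  · exact mem_erase.mpr ⟨ne_of_mem_of_not_mem hu hyS, huc σ hσ⟩

lemma map_toggle_mem_overlap (hY : IsCplx Y) {d : Finset (Finset V)}
    (hd : d ∈ vertexStar (lk {y} Y) S) :
    d.map (toggle y) ∈ vertexStar Y S ∩ vertexStar Y {y} := by
  simp only [mem_inter, mem_vertexStar, mem_singleton, exists_eq_left] at hd ⊢
  obtain ⟨hdlk, hchain, v, hv, hvlk, hvd⟩ := hd
  have hlk {ρ : Finset V} (hρ : ρ ∈ d) := mem_lk_singleton.mp (hdlk hρ)
  have hvyY := (mem_lk_singleton.mp hvlk).2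
  have hmap : d.map (toggle y) = d.image (insert y) := by
    rw [map_eq_image]
    exact image_congr fun ρ hρ => toggle_of_notMem (hlk hρ).1
  have hsub : d.map (toggle y) ⊆ Y := by
    rw [hmap, image_subset_iff]
    exact fun ρ hρ => (hlk hρ).2
  have hchain' : IsChain (· ⊆ ·) (d.map (toggle y) : Set (Finset V)) := by
    rw [hmap, coe_image]
    exact hchain.image_of_map_rel _ _ _ fun σ τ h => insert_subset_insert y h
  refine ⟨⟨hsub, hchain', v, hv, hY _ hvyY _ (subset_insert y {v}), ?_⟩, hsub, hchain',
    hY _ hvyY _ (singleton_subset_iff.mpr (mem_insert_self y {v})), ?_⟩ <;>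
    rw [hmap, forall_mem_image]
  · exact fun ρ hρ => mem_insert_of_mem (hvd ρ hρ)
  · exact fun ρ _ => mem_insert_self y ρ

lemma overlap_eq_image_toggle (hY : IsCplx Y) (hyS : y ∉ S)
    (hne : (vertexStar (lk {y} Y) S).Nonempty) :
    vertexStar Y S ∩ vertexStar Y {y} =
      (vertexStar (lk {y} Y) S).image (Finset.map (toggle y)) := by
  ext c
  rw [mem_image]
  constructor
  · exact fun hc => ⟨_, map_toggle_mem_vertexStar_lk hY hyS hne hc, map_toggle_map_toggle c⟩
  · rintro ⟨d, hd, rfl⟩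
    exact map_toggle_mem_overlap hY hd

end Overlap

/-! ### Star decompositions in vertices -/

/-- A list `L` of vertices of `Y`, in increasing order, satisfying the link condition of a star
decomposition in vertices. The list may omit an initial segment of the vertices of `Y`, and nothing
is required of the link of its last vertex. -/
structure StarOrder (Y : Finset (Finset V)) (L : List V) : Prop where
  nodup : L.Nodup
  singleton_mem : ∀ y ∈ L, {y} ∈ Y
  starDecV_lk : ∀ {y M}, y :: M <:+ L → M ≠ [] →
    StarDecV (lk {y} Y) (verts (lk {y} Y) ∩ M.toFinset)

section StarOrder

variable {Y : Finset (Finset V)} {k : ℤ} {L M : List V} {y : V}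

lemma StarOrder.of_suffix (hL : StarOrder Y L) (hM : M <:+ L) : StarOrder Y M where
  nodup := hL.nodup.sublist hM.sublist
  singleton_mem y hy := hL.singleton_mem y (hM.subset hy)
  starDecV_lk h := hL.starDecV_lk (h.trans hM)

lemma starOrder_of_toFinset_eq_verts (hY : IsCplx Y) (hnd : L.Nodup) (hV : L.toFinset = verts Y)
    (hlink : ∀ i, (hi : i + 1 < L.length) →
      StarDecV (lk {L.get ⟨i, Nat.lt_of_succ_lt hi⟩} Y)
        (verts (lk {L.get ⟨i, Nat.lt_of_succ_lt hi⟩} Y) ∩ (L.drop (i + 1)).toFinset)) :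
    StarOrder Y L where
  nodup := hnd
  singleton_mem y hy := (mem_verts_iff hY).mp (hV ▸ List.mem_toFinset.mpr hy)
  starDecV_lk := by
    rintro y M ⟨N, rfl⟩ hM
    simpa using hlink N.length (by simpa using List.length_pos_iff.mpr hM)

lemma StarDecV.exists_starOrder {S : Finset V} (hY : IsCplx Y) (hp : PureDim Y k) (hk : 0 ≤ k)
    (h : StarDecV Y S) : ∃ L, L ≠ [] ∧ StarOrder Y L ∧ S = L.toFinset := by
  cases h with
  | base =>
    obtain ⟨τ, hτ, -, hcard⟩ := hp.2.2 ∅ (mem_singleton_self ∅)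
    rw [mem_singleton.mp hτ, card_empty] at hcard
    lia
  | step _ _ _ _ _ L _ hnd hV horder hlink _ =>
    obtain ⟨j, hj, rfl⟩ := horder
    exact ⟨L.drop j, mt List.drop_eq_nil_iff.mp hj.not_ge,
      (starOrder_of_toFinset_eq_verts hY hnd hV hlink).of_suffix (L.drop_suffix j), rfl⟩

lemma InducesStarDecompV.exists_starOrder {Y₀ : Finset V} (hY : IsCplx Y)
    (h : InducesStarDecompV L Y Y₀) {i : ℕ} (hi : i < L.length) (hiY₀ : L[i] ∈ Y₀) :
    ∃ L₀, StarOrder Y L₀ ∧ L₀.toFinset = Y₀ ∧ L[i] :: L.drop (i + 1) <:+ L₀ := by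
  obtain ⟨rfl, -, -⟩ | ⟨-, hnd, hV, ⟨j, -, rfl⟩, hlink, -⟩ := h
  · exact absurd hi (Nat.not_lt_zero i)
  refine ⟨L.drop j, (starOrder_of_toFinset_eq_verts hY hnd hV hlink).of_suffix (L.drop_suffix j),
    rfl, ?_⟩
  have hdrop := List.drop_eq_getElem_cons hi
  rw [← hdrop]
  obtain hij | hji := List.suffix_or_suffix_of_suffix (L.drop_suffix i) (L.drop_suffix j)
  · exact hij
  rw [hdrop] at hji
  obtain heq | hs := List.suffix_cons_iff.mp hji
  · rw [hdrop, heq]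
  · have hnotMem := (List.nodup_cons.mp (hdrop ▸ hnd.sublist (L.drop_sublist i))).1
    exact absurd (hs.subset (List.mem_toFinset.mp hiY₀)) hnotMem

lemma StarOrder.notMem_toFinset (hL : StarOrder Y (y :: M)) : y ∉ M.toFinset :=
  fun h => (List.nodup_cons.mp hL.nodup).1 (List.mem_toFinset.mp h)

lemma StarOrder.vertexStar_nonempty (hL : StarOrder Y L) (hne : L ≠ []) :
    (vertexStar Y L.toFinset).Nonempty :=
  vertexStar_nonempty_iff.mpr <| (List.exists_mem_of_ne_nil L hne).imp fun v hv =>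
    ⟨List.mem_toFinset.mpr hv, hL.singleton_mem v hv⟩

lemma exactAt_vertexStar_of_overlaps {n : ℕ} (hne : L ≠ [])
    (h : ∀ {y M}, y :: M <:+ L → M ≠ [] → ∀ m, m + 1 = n →
      ExactAt (vertexStar Y M.toFinset ∩ vertexStar Y {y}) m) :
    ExactAt (vertexStar Y L.toFinset) n := by
  induction L with
  | nil => exact absurd rfl hne
  | cons y M ih =>
    obtain rfl | hM := eq_or_ne M []
    · exact exactAt_vertexStar_singleton y n
    · rw [List.toFinset_cons, vertexStar_insert]
      exact (ih hM fun hs => h (hs.trans (List.suffix_cons y M))).union isCplx_vertexStar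
        isCplx_vertexStar (exactAt_vertexStar_singleton y n) (h List.suffix_rfl hM)

lemma StarOrder.exactAt (hY : IsCplx Y) (hp : PureDim Y k) (hL : StarOrder Y L) (hne : L ≠ [])
    {n : ℕ} (hn : (n : ℤ) ≤ k) : ExactAt (vertexStar Y L.toFinset) n := by
  induction n generalizing Y k L with
  | zero => exact exactAt_vertexStar_of_overlaps hne fun _ _ m hm => absurd hm m.succ_ne_zero
  | succ n ih =>
    refine exactAt_vertexStar_of_overlaps hne fun {y M} hs hM m hm => ?_
    obtain rfl := Nat.succ.inj hm
    have hlk := hY.lk_singleton y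
    have hplk := hp.lk_singleton (hL.singleton_mem y (hs.subset List.mem_cons_self))
    obtain ⟨L', hne', hL', heq⟩ :=
      (hL.starDecV_lk hs hM).exists_starOrder hlk hplk (by lia)
    have hstar : vertexStar (lk {y} Y) M.toFinset = vertexStar (lk {y} Y) L'.toFinset := by
      rw [← heq, vertexStar_verts_inter hlk]
    rw [overlap_eq_image_toggle hY (hL.of_suffix hs).notMem_toFinset
      (hstar ▸ hL'.vertexStar_nonempty hne'), exactAt_image_map_iff, hstar]
    exact ih hlk hplk hL' hne' (by lia)

lemma StarOrder.exactAt_tail (hY : IsCplx Y) (hp : PureDim Y k) (hL : StarOrder Y (y :: M))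
    (hM : M ≠ []) (h : ∀ n, ExactAt (vertexStar Y (y :: M).toFinset) n) (n : ℕ) :
    ExactAt (vertexStar Y M.toFinset) n := by
  obtain hn | hn := le_or_gt (n : ℤ) k
  · exact (hL.of_suffix (List.suffix_cons y M)).exactAt hY hp hM hn
  · have hcard : ∀ c ∈ vertexStar Y M.toFinset ∩ vertexStar Y {y}, c.card ≠ n := fun c hc => by
      have := card_le_of_mem_overlap hL.notMem_toFinset (k := k.toNat)
        (fun σ hσ => by have := hp.2.1 σ hσ; lia) hc
      have := hp.2.1 _ (hL.singleton_mem y List.mem_cons_self)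
      rw [card_singleton] at this
      lia
    refine ExactAt.of_union_left isCplx_vertexStar isCplx_vertexStar hcard ?_
    rw [← vertexStar_insert, ← List.toFinset_cons]
    exact h n

lemma StarOrder.exactAt_suffix (hY : IsCplx Y) (hp : PureDim Y k) (hL : StarOrder Y L)
    (h : ∀ n, ExactAt (vertexStar Y L.toFinset) n) (hs : M <:+ L) (hM : M ≠ []) (n : ℕ) :
    ExactAt (vertexStar Y M.toFinset) n := by
  induction L with
  | nil => exact absurd (List.suffix_nil.mp hs) hM
  | cons y L ih =>
    obtain rfl | hs := List.suffix_cons_iff.mp hs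
    · exact h n
    · have hne : L ≠ [] := fun h => hM (List.suffix_nil.mp (h ▸ hs))
      exact ih (hL.of_suffix (List.suffix_cons y L)) (hL.exactAt_tail hY hp hne h) hs

lemma StarOrder.exactAt_overlap (hY : IsCplx Y) (hp : PureDim Y k) (hL : StarOrder Y (y :: M))
    (hM : M ≠ []) (h : ∀ n, ExactAt (vertexStar Y (y :: M).toFinset) n) (n : ℕ) :
    ExactAt (vertexStar Y M.toFinset ∩ vertexStar Y {y}) n := by
  refine ExactAt.inter isCplx_vertexStar isCplx_vertexStar (hL.exactAt_tail hY hp hM h n)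
    (exactAt_vertexStar_singleton y n) ?_
  rw [← vertexStar_insert, ← List.toFinset_cons]
  exact h (n + 1)

end StarOrder

theorem homology_link_property_general {Y : Finset (Finset V)} (hY : IsCplx Y) {k : ℤ}
    (hp : PureDim Y k) {L : List V} (hL : StarOrder Y L)
    (hhom : TrivialRedHomology (vertexStar Y L.toFinset)) {y : V} {M : List V}
    (hs : y :: M <:+ L) (hM : M ≠ []) :
    TrivialRedHomology (vertexStar (lk {y} Y) (verts (lk {y} Y) ∩ M.toFinset)) := by
  have hexact := hL.exactAt_suffix hY hp ((trivialRedHomology_iff isCplx_vertexStar).mp hhom).2 hs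
    (List.cons_ne_nil y M)
  have hL' := hL.of_suffix hs
  have hyM := hL'.notMem_toFinset
  have hoverlap := hL'.exactAt_overlap hY hp hM hexact
  obtain ⟨σ, hσ⟩ := (hoverlap 0).exists_singleton_mem <| mem_inter.mpr
    ⟨empty_mem_vertexStar ((hL'.of_suffix (List.suffix_cons y M)).vertexStar_nonempty hM),
      empty_mem_vertexStar (vertexStar_nonempty_iff.mpr
        ⟨y, mem_singleton_self y, hL'.singleton_mem y List.mem_cons_self⟩)⟩
  have hne := vertexStar_lk_nonempty_of_singleton_mem_overlap hY hyM hσ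
  rw [vertexStar_verts_inter (hY.lk_singleton y), trivialRedHomology_iff isCplx_vertexStar]
  refine ⟨hne, fun n => ?_⟩
  rw [← exactAt_image_map_iff (toggle y), ← overlap_eq_image_toggle hY hyM hne]
  exact hoverlap n

/-- If `≺` (encoded by `L`) induces a star decomposition of
`(sd Y, Y₀)` in vertices and `st(Y₀, sd Y)` has trivial reduced homology, then for every
`y ∈ Y₀` other than the `≺`-largest vertex, `st(V(lk({y},Y))_{≻y}, sd lk({y},Y))` has
trivial reduced homology as well. -/
theorem homology_link_property {V : Type*} [DecidableEq V] (Y : Finset (Finset V))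
    (hY : IsCplx Y) (dY : ℤ) (hpY : PureDim Y dY) (Y₀ : Finset V) (hY₀ : Y₀ ⊆ verts Y)
    (L : List V) (hL : InducesStarDecompV L Y Y₀)
    (hhom : TrivialRedHomology (starSet (Y₀.image fun v => ({v} : Finset V)) (sd Y))) :
    ∀ i, (hi : i + 1 < L.length) → L.get ⟨i, by omega⟩ ∈ Y₀ →
      TrivialRedHomology (starSet
        (((verts (lk {L.get ⟨i, by omega⟩} Y) ∩ (L.drop (i + 1)).toFinset)).image
          fun v => ({v} : Finset V))
        (sd (lk {L.get ⟨i, by omega⟩} Y))) := by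
  intro i hi hiY₀
  obtain ⟨L₀, hL₀, rfl, hsuffix⟩ := hL.exists_starOrder hY (Nat.lt_of_succ_lt hi) hiY₀
  exact homology_link_property_general hY hpY hL₀ hhom hsuffix
    (mt List.drop_eq_nil_iff.mp hi.not_ge)

end Paper
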